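/- arXiv:1306.4221 — 2 statements merged into one kernel-verified Lean document; each statement's English description precedes it below -/
import Mathlib

section
/- The 6×6 real symmetric Coxeter–Schläfli matrix C₂ of the compact Coxeter orthoscheme [5,3,3,3,4] has leading principal minors of orders 1, 2, 3, and 4 strictly positive, while its leading principal minors of orders 5 and 6 are strictly negative; consequently the associated quadratic form has signature (5,1), i.e. exactly one negative eigenvalue. -/
open Real Matrix

/-- The Coxeter–Schläfli matrix of the compact Coxeter orthoscheme `[5,3,3,3,4]`. -/
noncomputable def C2 : Matrix (Fin 6) (Fin 6) ℝ :=
  !![1, -Real.cos (π/5), 0, 0, 0, 0;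
     -Real.cos (π/5), 1, -(1/2), 0, 0, 0;
     0, -(1/2), 1, -(1/2), 0, 0;
     0, 0, -(1/2), 1, -(1/2), 0;
     0, 0, 0, -(1/2), 1, -(Real.sqrt 2/2);
     0, 0, 0, 0, -(Real.sqrt 2/2), 1]

/-- The leading principal minor of order `k` of a `6 × 6` real matrix. -/
noncomputable def leadingMinor (A : Matrix (Fin 6) (Fin 6) ℝ) (k : ℕ) (h : k ≤ 6) : ℝ :=
  (A.submatrix (Fin.castLE h) (Fin.castLE h)).det

/-
The leading principal minors of a tridiagonal matrix satisfy a two-term recurrence, which gives the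
minors of `C2` in closed form in `ℚ(√5)`. By Sylvester's criterion the block of order 4 is positive
definite, so `C2` has at least four positive eigenvalues; as the determinant is negative, none of
the six eigenvalues vanishes and the number of negative ones is odd, hence one. Sylvester's
criterion itself is the same parity argument: if the block of order `n` is positive definite, at
most one of the `n + 1` eigenvalues is negative, and a positive determinant excludes exactly one.
-/

section Tridiagonal

variable {R : Type*} {n : ℕ}

/-- A square matrix is tridiagonal if its entries away from the main diagonal and the two adjacent
diagonals vanish. The Coxeter–Schläfli matrix of an orthoscheme, whose Coxeter diagram is a path,
has this shape. -/
def IsTridiagonal [Zero R] (A : Matrix (Fin n) (Fin n) R) : Prop :=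
  ∀ i j : Fin n, (i : ℕ) + 1 < j ∨ (j : ℕ) + 1 < i → A i j = 0

theorem IsTridiagonal.submatrix_castLE [Zero R] {A : Matrix (Fin n) (Fin n) R}
    (hA : IsTridiagonal A) {k : ℕ} (h : k ≤ n) :
    IsTridiagonal (A.submatrix (Fin.castLE h) (Fin.castLE h)) :=
  fun i j hij => hA (Fin.castLE h i) (Fin.castLE h j) hij

theorem det_eq_mul_det_castSucc_of_last_col_eq_zero [CommRing R]
    (A : Matrix (Fin (n + 1)) (Fin (n + 1)) R)
    (hcol : ∀ i : Fin n, A i.castSucc (Fin.last n) = 0) :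
    A.det = A (Fin.last n) (Fin.last n) * (A.submatrix Fin.castSucc Fin.castSucc).det := by
  rw [det_succ_column A (Fin.last n), Fin.sum_univ_castSucc]
  simp [hcol, ← two_mul, Fin.succAbove_last]

theorem IsTridiagonal.det_succ_succ [CommRing R] {A : Matrix (Fin (n + 2)) (Fin (n + 2)) R}
    (hA : IsTridiagonal A) :
    A.det =
      A (Fin.last _) (Fin.last _) * (A.submatrix Fin.castSucc Fin.castSucc).det -
      A (Fin.last _) (Fin.last n).castSucc * A (Fin.last n).castSucc (Fin.last _) *
        (A.submatrix (Fin.castSucc ∘ Fin.castSucc) (Fin.castSucc ∘ Fin.castSucc)).det := by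
  have hrow (j : Fin n) : A (Fin.last _) j.castSucc.castSucc = 0 := hA _ _ (by simp)
  have hcol (i : Fin n) : A i.castSucc.castSucc (Fin.last _) = 0 := hA _ _ (by simp)
  have hminor : (A.submatrix Fin.castSucc (Fin.last n).castSucc.succAbove).det =
      A (Fin.last n).castSucc (Fin.last _) *
        (A.submatrix (Fin.castSucc ∘ Fin.castSucc) (Fin.castSucc ∘ Fin.castSucc)).det := by
    have hskip : (Fin.last n).castSucc.succAbove ∘ Fin.castSucc = Fin.castSucc ∘ Fin.castSucc :=
      funext fun j => Fin.succAbove_castSucc_of_lt _ _ (Fin.castSucc_lt_last j)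
    rw [det_eq_mul_det_castSucc_of_last_col_eq_zero _ fun i => by simpa using hcol i,
      submatrix_submatrix, hskip]
    simp
  rw [det_succ_row A (Fin.last _), Fin.sum_univ_castSucc, Fin.sum_univ_castSucc]
  simp only [Nat.succ_eq_add_one, Fin.val_last, Fin.val_castSucc, hrow, mul_zero, zero_mul,
    Fin.succAbove_last, Finset.sum_const_zero, zero_add, hminor, odd_add_one_self,
    Odd.neg_one_pow, ← two_mul, even_two, Even.mul_right, Even.neg_pow, one_pow]
  ring

end Tridiagonal

section Signature

theorem prod_eq_neg_one_pow_card_neg_mul_abs_prod {ι R : Type*} [CommRing R] [LinearOrder R]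
    [IsStrictOrderedRing R] (s : Finset ι) (f : ι → R) :
    ∏ i ∈ s, f i = (-1) ^ (s.filter fun i => f i < 0).card * |∏ i ∈ s, f i| := by
  have hsign (x : R) : x = (if x < 0 then -1 else 1) * |x| := by
    split_ifs with hx
    · rw [abs_of_neg hx, neg_one_mul, neg_neg]
    · rw [abs_of_nonneg (not_lt.1 hx), one_mul]
  calc ∏ i ∈ s, f i = ∏ i ∈ s, (if f i < 0 then -1 else 1) * |f i| :=
        Finset.prod_congr rfl fun i _ => hsign (f i)
    _ = (-1) ^ (s.filter fun i => f i < 0).card * |∏ i ∈ s, f i| := by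
        rw [Finset.prod_mul_distrib, ← Finset.prod_filter, Finset.prod_const, Finset.abs_prod]

variable {m n : Type*} [Fintype m] [Fintype n] [DecidableEq n] {A : Matrix n n ℝ}

theorem toQuadraticForm'_apply (A : Matrix n n ℝ) (x : n → ℝ) :
    A.toQuadraticForm' x = x ⬝ᵥ A *ᵥ x := by
  simp [toQuadraticForm', toLinearMap₂'_apply']

theorem toQuadraticForm'_equivalent_weightedSumSquares_eigenvalues (hA : A.IsHermitian) :
    A.toQuadraticForm'.Equivalent (QuadraticMap.weightedSumSquares ℝ hA.eigenvalues) := by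
  let v := hA.eigenvectorBasis.toBasis.map (WithLp.linearEquiv 2 ℝ (n → ℝ))
  have hdot (i j : n) : v i ⬝ᵥ v j = if i = j then 1 else 0 := by
    rw [← orthonormal_iff_ite.1 hA.eigenvectorBasis.orthonormal i j,
      EuclideanSpace.inner_eq_star_dotProduct, dotProduct_comm]
    simp [v]
  have hmul (i : n) : A *ᵥ v i = hA.eigenvalues i • v i := by
    simpa [v] using hA.mulVec_eigenvectorBasis i
  have hrepr : A.toQuadraticForm'.basisRepr v =
      QuadraticMap.weightedSumSquares ℝ hA.eigenvalues := by
    ext w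
    simp [QuadraticMap.basisRepr_apply, toQuadraticForm'_apply, mulVec_sum, mulVec_smul, hmul,
      dotProduct_sum, sum_dotProduct, hdot, mul_left_comm]
  exact hrepr ▸ ⟨A.toQuadraticForm'.isometryEquivBasisRepr v⟩

theorem sigPos_toQuadraticForm' (hA : A.IsHermitian) :
    sigPos A.toQuadraticForm' = Finset.card {i | 0 < hA.eigenvalues i} := by
  rw [QuadraticForm.sigPos_of_equiv_weightedSumSquares
    (toQuadraticForm'_equivalent_weightedSumSquares_eigenvalues hA), Set.ncard_eq_toFinset_card']
  simp

theorem card_le_card_eigenvalues_pos_of_posDef_conj (hA : A.IsHermitian) {B : Matrix n m ℝ}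
    (hB : (Bᵀ * A * B).PosDef) :
    Fintype.card m ≤ Finset.card {i | 0 < hA.eigenvalues i} := by
  have hpos (x : m → ℝ) (hx : x ≠ 0) : 0 < A.toQuadraticForm' (B *ᵥ x) := by
    simpa [toQuadraticForm'_apply, dotProduct_mulVec, vecMul_mulVec, ← vecMul_vecMul,
      ← mulVec_mulVec, mul_assoc] using hB.dotProduct_mulVec_pos hx
  have hinj : Function.Injective B.mulVecLin := by
    refine (injective_iff_map_eq_zero _).2 fun x hx => ?_
    by_contra hne
    exact (hpos x hne).ne' (by rw [show B *ᵥ x = 0 from hx, map_zero])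
  have hrange : (A.toQuadraticForm'.restrict (LinearMap.range B.mulVecLin)).PosDef := by
    rintro ⟨_, x, rfl⟩ hx
    exact hpos x fun h0 => hx (by simp [h0])
  calc Fintype.card m = Module.finrank ℝ (LinearMap.range B.mulVecLin) := by
        rw [LinearMap.finrank_range_of_inj hinj, Module.finrank_fintype_fun_eq_card]
    _ ≤ sigPos A.toQuadraticForm' := le_sigPos_of_posDef _ hrange
    _ = _ := sigPos_toQuadraticForm' hA

theorem card_le_card_eigenvalues_pos_of_posDef_submatrix (hA : A.IsHermitian) {e : m → n}
    (he : (A.submatrix e e).PosDef) :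
    Fintype.card m ≤ Finset.card {i | 0 < hA.eigenvalues i} := by
  let B : Matrix n m ℝ := (1 : Matrix n n ℝ).submatrix id e
  have hB : Bᵀ * A * B = A.submatrix e e := by
    ext i j
    simp [B, mul_apply, one_apply]
  exact card_le_card_eigenvalues_pos_of_posDef_conj hA (hB ▸ he)

theorem det_eq_neg_one_pow_card_eigenvalues_neg_mul_abs_det (hA : A.IsHermitian) :
    A.det = (-1) ^ Finset.card {i | hA.eigenvalues i < 0} * |A.det| := by
  simpa [hA.det_eq_prod_eigenvalues] using
    prod_eq_neg_one_pow_card_neg_mul_abs_prod Finset.univ hA.eigenvalues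

theorem card_eigenvalues_neg_add_card_eigenvalues_pos (hA : A.IsHermitian) (hdet : A.det ≠ 0) :
    Finset.card {i | hA.eigenvalues i < 0} + Finset.card {i | 0 < hA.eigenvalues i} =
      Fintype.card n := by
  have hne (i : n) : hA.eigenvalues i ≠ 0 := by
    have : ∏ i, hA.eigenvalues i ≠ 0 := by simpa [hA.det_eq_prod_eigenvalues] using hdet
    exact Finset.prod_ne_zero_iff.1 this i (Finset.mem_univ i)
  have hnot : Finset.filter (fun i => 0 < hA.eigenvalues i) Finset.univ =
      Finset.filter (fun i => ¬ hA.eigenvalues i < 0) Finset.univ := by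
    simp [(hne _).symm.le_iff_lt]
  rw [hnot, Finset.card_filter_add_card_filter_not, Finset.card_univ]

theorem even_card_eigenvalues_neg_of_det_pos (hA : A.IsHermitian) (hdet : 0 < A.det) :
    Even (Finset.card {i | hA.eigenvalues i < 0}) := by
  refine (Nat.even_or_odd _).resolve_right fun hodd => ?_
  have := det_eq_neg_one_pow_card_eigenvalues_neg_mul_abs_det hA
  rw [hodd.neg_one_pow, abs_of_pos hdet] at this
  linarith

theorem odd_card_eigenvalues_neg_of_det_neg (hA : A.IsHermitian) (hdet : A.det < 0) :
    Odd (Finset.card {i | hA.eigenvalues i < 0}) := by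
  refine (Nat.even_or_odd _).resolve_left fun heven => ?_
  have := det_eq_neg_one_pow_card_eigenvalues_neg_mul_abs_det hA
  rw [heven.neg_one_pow, abs_of_neg hdet] at this
  linarith

theorem posDef_of_posDef_submatrix_of_det_pos (hA : A.IsHermitian) {e : m → n}
    (he : (A.submatrix e e).PosDef) (hcard : Fintype.card n ≤ Fintype.card m + 1)
    (hdet : 0 < A.det) : A.PosDef := by
  have hpos := card_le_card_eigenvalues_pos_of_posDef_submatrix hA he
  have hsum := card_eigenvalues_neg_add_card_eigenvalues_pos hA hdet.ne'
  obtain ⟨r, hr⟩ := even_card_eigenvalues_neg_of_det_pos hA hdet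
  have hall : Finset.card {i | 0 < hA.eigenvalues i} = Fintype.card n := by omega
  rw [hA.posDef_iff_eigenvalues_pos]
  simpa [Finset.card_eq_iff_eq_univ, Finset.filter_eq_self] using hall

theorem posDef_of_forall_det_castLE_pos {n : ℕ} {A : Matrix (Fin n) (Fin n) ℝ}
    (hA : A.IsHermitian)
    (hminor : ∀ k (h : k ≤ n), 0 < (A.submatrix (Fin.castLE h) (Fin.castLE h)).det) :
    A.PosDef := by
  induction n with
  | zero => exact .of_dotProduct_mulVec_pos hA fun x hx => (hx (Subsingleton.elim _ _)).elim
  | succ n ih =>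
    have hlead : (A.submatrix Fin.castSucc Fin.castSucc).PosDef :=
      ih (hA.submatrix _) fun k h => hminor k (h.trans n.le_succ)
    exact posDef_of_posDef_submatrix_of_det_pos hA hlead (by simp) (hminor (n + 1) le_rfl)

theorem card_eigenvalues_neg_eq_one_of_posDef_submatrix_of_det_neg (hA : A.IsHermitian) {e : m → n}
    (he : (A.submatrix e e).PosDef) (hcard : Fintype.card n ≤ Fintype.card m + 2)
    (hdet : A.det < 0) : Finset.card {i | hA.eigenvalues i < 0} = 1 := by
  have hpos := card_le_card_eigenvalues_pos_of_posDef_submatrix hA he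
  have hsum := card_eigenvalues_neg_add_card_eigenvalues_pos hA hdet.ne
  obtain ⟨r, hr⟩ := odd_card_eigenvalues_neg_of_det_neg hA hdet
  omega

end Signature

section LeadingMinor

variable {A : Matrix (Fin 6) (Fin 6) ℝ}

theorem leadingMinor_zero (A : Matrix (Fin 6) (Fin 6) ℝ) : leadingMinor A 0 (by norm_num) = 1 :=
  det_isEmpty

theorem leadingMinor_one (A : Matrix (Fin 6) (Fin 6) ℝ) :
    leadingMinor A 1 (by norm_num) = A 0 0 :=
  det_unique _

theorem IsTridiagonal.leadingMinor_add_two (hA : IsTridiagonal A) (k : ℕ) (h : k + 2 ≤ 6) :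
    leadingMinor A (k + 2) h =
      A ⟨k + 1, h⟩ ⟨k + 1, h⟩ * leadingMinor A (k + 1) (by lia) -
      A ⟨k + 1, h⟩ ⟨k, by lia⟩ * A ⟨k, by lia⟩ ⟨k + 1, h⟩ * leadingMinor A k (by lia) :=
  (hA.submatrix_castLE h).det_succ_succ

theorem posDef_submatrix_castLE_of_forall_leadingMinor_pos (hA : A.IsHermitian) {n : ℕ}
    (hn : n ≤ 6) (hminor : ∀ k (h : k ≤ n), 0 < leadingMinor A k (h.trans hn)) :
    (A.submatrix (Fin.castLE hn) (Fin.castLE hn)).PosDef :=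
  posDef_of_forall_det_castLE_pos (hA.submatrix _) hminor

end LeadingMinor

section C2

theorem cos_pi_div_five_sq : cos (π / 5) ^ 2 = (3 + √5) / 8 := by
  rw [cos_pi_div_five, div_pow, add_sq, sq_sqrt (by norm_num)]
  ring

theorem isTridiagonal_C2 : IsTridiagonal C2 := by
  intro i j hij
  fin_cases i <;> fin_cases j <;> simp_all [C2]

theorem C2_apply_self (i : Fin 6) : C2 i i = 1 := by
  fin_cases i <;> rfl

theorem isSymm_C2 : C2.IsSymm := by
  ext i j
  fin_cases i <;> fin_cases j <;> rfl

theorem leadingMinor_C2_add_two (k : ℕ) (h : k + 2 ≤ 6) {b : ℝ}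
    (hb : C2 ⟨k + 1, h⟩ ⟨k, by lia⟩ = b) :
    leadingMinor C2 (k + 2) h =
      leadingMinor C2 (k + 1) (by lia) - b ^ 2 * leadingMinor C2 k (by lia) := by
  rw [isTridiagonal_C2.leadingMinor_add_two, C2_apply_self, one_mul,
    isSymm_C2.apply ⟨k + 1, h⟩ ⟨k, by lia⟩, hb, sq]

theorem leadingMinor_C2_one : leadingMinor C2 1 (by norm_num) = 1 :=
  (leadingMinor_one C2).trans (C2_apply_self 0)

theorem leadingMinor_C2_two : leadingMinor C2 2 (by norm_num) = (5 - √5) / 8 := by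
  rw [leadingMinor_C2_add_two 0 (b := -cos (π / 5)) (by norm_num) rfl, leadingMinor_C2_one,
    leadingMinor_zero]
  linear_combination -cos_pi_div_five_sq

theorem leadingMinor_C2_three : leadingMinor C2 3 (by norm_num) = (3 - √5) / 8 := by
  rw [leadingMinor_C2_add_two 1 (b := -(1 / 2)) (by norm_num) rfl, leadingMinor_C2_two,
    leadingMinor_C2_one]
  ring

theorem leadingMinor_C2_four : leadingMinor C2 4 (by norm_num) = (7 - 3 * √5) / 32 := by
  rw [leadingMinor_C2_add_two 2 (b := -(1 / 2)) (by norm_num) rfl, leadingMinor_C2_three,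
    leadingMinor_C2_two]
  ring

theorem leadingMinor_C2_five : leadingMinor C2 5 (by norm_num) = (2 - √5) / 16 := by
  rw [leadingMinor_C2_add_two 3 (b := -(1 / 2)) (by norm_num) rfl, leadingMinor_C2_four,
    leadingMinor_C2_three]
  ring

theorem leadingMinor_C2_six : leadingMinor C2 6 (by norm_num) = (1 - √5) / 64 := by
  rw [leadingMinor_C2_add_two 4 (b := -(√2 / 2)) (by norm_num) rfl, leadingMinor_C2_five,
    leadingMinor_C2_four]
  linear_combination -((7 - 3 * √5) / 128) * sq_sqrt (zero_le_two (α := ℝ))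

end C2

theorem stmt1 :
    0 < leadingMinor C2 1 (by norm_num) ∧
    0 < leadingMinor C2 2 (by norm_num) ∧
    0 < leadingMinor C2 3 (by norm_num) ∧
    0 < leadingMinor C2 4 (by norm_num) ∧
    leadingMinor C2 5 (by norm_num) < 0 ∧
    leadingMinor C2 6 (by norm_num) < 0 ∧
    ∀ hC : C2.IsHermitian,
      (Finset.univ.filter fun i => hC.eigenvalues i < 0).card = 1 ∧
      (Finset.univ.filter fun i => 0 < hC.eigenvalues i).card = 5 := by
  have sqrt_five_gt : 2 < √5 := by rw [lt_sqrt (by norm_num)]; norm_num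
  have sqrt_five_lt : √5 < 7 / 3 := by rw [sqrt_lt' (by norm_num)]; norm_num
  have h1 : 0 < leadingMinor C2 1 (by norm_num) := by rw [leadingMinor_C2_one]; norm_num
  have h2 : 0 < leadingMinor C2 2 (by norm_num) := by rw [leadingMinor_C2_two]; linarith
  have h3 : 0 < leadingMinor C2 3 (by norm_num) := by rw [leadingMinor_C2_three]; linarith
  have h4 : 0 < leadingMinor C2 4 (by norm_num) := by rw [leadingMinor_C2_four]; linarith
  have h5 : leadingMinor C2 5 (by norm_num) < 0 := by rw [leadingMinor_C2_five]; linarith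
  have h6 : leadingMinor C2 6 (by norm_num) < 0 := by rw [leadingMinor_C2_six]; linarith
  refine ⟨h1, h2, h3, h4, h5, h6, fun hC => ?_⟩
  have hlead : (C2.submatrix (Fin.castLE _) (Fin.castLE _)).PosDef :=
    posDef_submatrix_castLE_of_forall_leadingMinor_pos hC (n := 4) (by norm_num) fun k hk => by
      interval_cases k
      exacts [leadingMinor_zero C2 ▸ one_pos, h1, h2, h3, h4]
  have hdet : C2.det < 0 := h6
  have hneg := card_eigenvalues_neg_eq_one_of_posDef_submatrix_of_det_neg hC hlead (by simp) hdet
  have hsum := card_eigenvalues_neg_add_card_eigenvalues_pos hC hdet.ne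
  rw [Fintype.card_fin] at hsum
  exact ⟨hneg, by lia⟩
end

section
/- Let H = C₂⁻¹ be the inverse of the Coxeter–Schläfli matrix of [5,3,3,3,4]. Then H[4][4] < 0, H[5][5] > 0 and H[4][5] ≠ 0 (geometrically: the vertex A₄ of the orthoscheme is a proper point of H⁵ while A₅ is an outer point). Consequently the quotient (H[4][4]·H[5][5] − H[4][5]²)/(H[4][4]·H[5][5]) is strictly greater than 1. -/
open Real Matrix

/-!
The inverse of a tridiagonal matrix is visible at its lower right corner through its leading
principal minors `θ_k`: in size `n + 2`, the last diagonal cofactor is `θ_{n + 1}`, the one before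
it is `a_{n + 1} θ_n`, and the cofactor coupling them is `-b_n θ_n`. The minors obey the three-term
recurrence `θ_{n + 2} = a_{n + 1} θ_{n + 1} - b_n c_n θ_n`. For `[5,3,3,3,4]` the value
`cos² (π / 5) = (3 + √5) / 8 ∈ (5 / 8, 2 / 3)` makes the minor `θ_4` of the finite group
`[5,3,3]` positive and the minors `θ_5`, `θ_6` of `[5,3,3,3]` and `[5,3,3,3,4]` negative, which
determines all the signs.
-/

theorem inv_apply_eq_adjugate_div_det {ι K : Type*} [Fintype ι] [DecidableEq ι] [Field K]
    (A : Matrix ι ι K) (i j : ι) : A⁻¹ i j = A.adjugate i j / A.det := by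
  rw [inv_def, Ring.inverse_eq_inv', Matrix.smul_apply, smul_eq_mul, inv_mul_eq_div]

section Tridiagonal

variable {R : Type*} [CommRing R] {n : ℕ}

theorem det_eq_mul_det_submatrix_castSucc (A : Matrix (Fin (n + 1)) (Fin (n + 1)) R)
    (hA : ∀ i : Fin n, A i.castSucc (Fin.last n) = 0) :
    A.det = A (Fin.last n) (Fin.last n) * (A.submatrix Fin.castSucc Fin.castSucc).det := by
  rw [det_succ_column A (Fin.last n), Fin.sum_univ_castSucc]
  simp [hA, ← two_mul]

/-- The `n × n` tridiagonal matrix with diagonal `a`, superdiagonal `b` and subdiagonal `c`. The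
coefficients are sequences, so that the leading principal submatrices of a tridiagonal matrix are
given by the same data. -/
def tridiagonal (a b c : ℕ → R) (n : ℕ) : Matrix (Fin n) (Fin n) R :=
  of fun i j ↦
    if (i : ℕ) = j then a i
    else if (i : ℕ) + 1 = j then b i
    else if (i : ℕ) = j + 1 then c j
    else 0

theorem tridiagonal_apply_eq_zero {a b c : ℕ → R} {i j : Fin n}
    (h : (i : ℕ) + 1 < j ∨ (j : ℕ) + 1 < i) : tridiagonal a b c n i j = 0 := by
  simp only [tridiagonal, of_apply]
  grind

variable (a b c : ℕ → R) (n)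

theorem tridiagonal_submatrix_castSucc :
    (tridiagonal a b c (n + 1)).submatrix Fin.castSucc Fin.castSucc = tridiagonal a b c n :=
  rfl

theorem adjugate_tridiagonal_last_last :
    (tridiagonal a b c (n + 1)).adjugate (Fin.last n) (Fin.last n) =
      (tridiagonal a b c n).det := by
  rw [adjugate_fin_succ_eq_det_submatrix, Fin.succAbove_last, tridiagonal_submatrix_castSucc]
  simp [← two_mul]

theorem adjugate_tridiagonal_penultimate_last :
    (tridiagonal a b c (n + 2)).adjugate (Fin.last n).castSucc (Fin.last (n + 1)) =
      -b n * (tridiagonal a b c n).det := by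
  rw [adjugate_fin_succ_eq_det_submatrix, det_eq_mul_det_submatrix_castSucc]
  · have hminor : ((tridiagonal a b c (n + 2)).submatrix (Fin.last (n + 1)).succAbove
        (Fin.last n).castSucc.succAbove).submatrix Fin.castSucc Fin.castSucc =
        tridiagonal a b c n := by
      ext i j
      simp [tridiagonal]
    have hcorner : (tridiagonal a b c (n + 2)).submatrix (Fin.last (n + 1)).succAbove
        (Fin.last n).castSucc.succAbove (Fin.last n) (Fin.last n) = b n := by
      simp [tridiagonal]
    have hsign : (-1 : R) ^ (n + 1 + n) = -1 := Odd.neg_one_pow ⟨n, by ring⟩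
    rw [hminor, hcorner, Fin.val_last, Fin.val_castSucc, Fin.val_last, hsign, neg_one_mul, neg_mul]
  · intro i
    apply tridiagonal_apply_eq_zero
    simp

theorem adjugate_tridiagonal_penultimate_penultimate :
    (tridiagonal a b c (n + 2)).adjugate (Fin.last n).castSucc (Fin.last n).castSucc =
      a (n + 1) * (tridiagonal a b c n).det := by
  rw [adjugate_fin_succ_eq_det_submatrix, det_eq_mul_det_submatrix_castSucc]
  · have hminor : ((tridiagonal a b c (n + 2)).submatrix (Fin.last n).castSucc.succAbove
        (Fin.last n).castSucc.succAbove).submatrix Fin.castSucc Fin.castSucc =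
        tridiagonal a b c n := by
      ext i j
      simp [tridiagonal]
    have hcorner : (tridiagonal a b c (n + 2)).submatrix (Fin.last n).castSucc.succAbove
        (Fin.last n).castSucc.succAbove (Fin.last n) (Fin.last n) = a (n + 1) := by
      simp [tridiagonal]
    rw [hminor, hcorner, Even.neg_one_pow (Even.add_self _), one_mul]
  · intro i
    apply tridiagonal_apply_eq_zero
    simp

theorem det_tridiagonal_zero : (tridiagonal a b c 0).det = 1 :=
  det_fin_zero

theorem det_tridiagonal_one : (tridiagonal a b c 1).det = a 0 :=
  det_fin_one _

theorem det_tridiagonal_add_two :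
    (tridiagonal a b c (n + 2)).det =
      a (n + 1) * (tridiagonal a b c (n + 1)).det - b n * c n * (tridiagonal a b c n).det := by
  have hzero (j : Fin n) :
      tridiagonal a b c (n + 2) (Fin.last (n + 1)) j.castSucc.castSucc = 0 := by
    apply tridiagonal_apply_eq_zero
    simp
  have hsub : tridiagonal a b c (n + 2) (Fin.last (n + 1)) (Fin.last n).castSucc = c n := by
    simp only [tridiagonal, of_apply, Fin.val_last, Fin.val_castSucc]
    grind
  have hdiag : tridiagonal a b c (n + 2) (Fin.last (n + 1)) (Fin.last (n + 1)) = a (n + 1) :=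
    if_pos rfl
  rw [det_eq_sum_mul_adjugate_row _ (Fin.last (n + 1)), Fin.sum_univ_castSucc,
    Fin.sum_univ_castSucc]
  simp only [hzero, hsub, hdiag, zero_mul, Finset.sum_const_zero, zero_add,
    adjugate_tridiagonal_last_last, adjugate_tridiagonal_penultimate_last]
  ring

end Tridiagonal

section Orthoscheme

/-- The Coxeter–Schläfli matrix of size `n` of an orthoscheme, that is, of a Coxeter diagram which
is a path with edge labels `p`. Only the first `n - 1` labels matter. As in `CoxeterMatrix`, the
label `0` stands for `∞`: the corresponding entry is `-cos (π / 0) = -cos 0 = -1`. -/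
noncomputable def schlafliMatrix (p : ℕ → ℕ) (n : ℕ) : Matrix (Fin n) (Fin n) ℝ :=
  tridiagonal 1 (fun k ↦ -cos (π / p k)) (fun k ↦ -cos (π / p k)) n

section

variable (p : ℕ → ℕ) (n : ℕ)

theorem det_schlafliMatrix_zero : (schlafliMatrix p 0).det = 1 :=
  det_fin_zero

theorem det_schlafliMatrix_one : (schlafliMatrix p 1).det = 1 :=
  det_fin_one _

theorem det_schlafliMatrix_add_two :
    (schlafliMatrix p (n + 2)).det =
      (schlafliMatrix p (n + 1)).det - cos (π / p n) ^ 2 * (schlafliMatrix p n).det := by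
  simp only [schlafliMatrix, det_tridiagonal_add_two, Pi.one_apply, one_mul, neg_mul_neg, sq]

theorem inv_schlafliMatrix_last_last :
    (schlafliMatrix p (n + 1))⁻¹ (Fin.last n) (Fin.last n) =
      (schlafliMatrix p n).det / (schlafliMatrix p (n + 1)).det := by
  rw [inv_apply_eq_adjugate_div_det, schlafliMatrix, adjugate_tridiagonal_last_last,
    schlafliMatrix]

theorem inv_schlafliMatrix_penultimate_penultimate :
    (schlafliMatrix p (n + 2))⁻¹ (Fin.last n).castSucc (Fin.last n).castSucc =
      (schlafliMatrix p n).det / (schlafliMatrix p (n + 2)).det := by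
  rw [inv_apply_eq_adjugate_div_det, schlafliMatrix, adjugate_tridiagonal_penultimate_penultimate,
    Pi.one_apply, one_mul, schlafliMatrix]

theorem inv_schlafliMatrix_penultimate_last :
    (schlafliMatrix p (n + 2))⁻¹ (Fin.last n).castSucc (Fin.last (n + 1)) =
      cos (π / p n) * (schlafliMatrix p n).det / (schlafliMatrix p (n + 2)).det := by
  rw [inv_apply_eq_adjugate_div_det, schlafliMatrix, adjugate_tridiagonal_penultimate_last,
    neg_neg, schlafliMatrix]

end

/-- The Schläfli symbol `[5,3,3,3,4]`, continued by the label `2` of orthogonal mirrors. -/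
def schlafliSymbol (k : ℕ) : ℕ :=
  [5, 3, 3, 3, 4].getD k 2

theorem C2_eq_schlafliMatrix : C2 = schlafliMatrix schlafliSymbol 6 := by
  ext i j
  fin_cases i <;> fin_cases j <;> simp [C2, schlafliMatrix, tridiagonal, schlafliSymbol]

theorem det_schlafliMatrix_schlafliSymbol_three :
    (schlafliMatrix schlafliSymbol 3).det = 3 / 4 - cos (π / 5) ^ 2 := by
  have hfirst : schlafliSymbol 0 = 5 := rfl
  have hsecond : schlafliSymbol 1 = 3 := rfl
  rw [det_schlafliMatrix_add_two, det_schlafliMatrix_add_two, det_schlafliMatrix_zero,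
    det_schlafliMatrix_one, hfirst, hsecond, Nat.cast_ofNat, Nat.cast_ofNat, cos_pi_div_three]
  ring

theorem det_schlafliMatrix_schlafliSymbol_four :
    (schlafliMatrix schlafliSymbol 4).det = 1 / 2 - 3 / 4 * cos (π / 5) ^ 2 := by
  have hfirst : schlafliSymbol 0 = 5 := rfl
  have hthird : schlafliSymbol 2 = 3 := rfl
  rw [det_schlafliMatrix_add_two, det_schlafliMatrix_schlafliSymbol_three,
    det_schlafliMatrix_add_two, det_schlafliMatrix_zero, det_schlafliMatrix_one, hfirst, hthird,
    Nat.cast_ofNat, Nat.cast_ofNat, cos_pi_div_three]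
  ring

theorem det_schlafliMatrix_schlafliSymbol_five :
    (schlafliMatrix schlafliSymbol 5).det = 5 / 16 - cos (π / 5) ^ 2 / 2 := by
  have hfourth : schlafliSymbol 3 = 3 := rfl
  rw [det_schlafliMatrix_add_two, det_schlafliMatrix_schlafliSymbol_four,
    det_schlafliMatrix_schlafliSymbol_three, hfourth, Nat.cast_ofNat, cos_pi_div_three]
  ring

theorem det_schlafliMatrix_schlafliSymbol_six :
    (schlafliMatrix schlafliSymbol 6).det = 1 / 16 - cos (π / 5) ^ 2 / 8 := by
  have hfifth : schlafliSymbol 4 = 4 := rfl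
  rw [det_schlafliMatrix_add_two, det_schlafliMatrix_schlafliSymbol_five,
    det_schlafliMatrix_schlafliSymbol_four, hfifth, Nat.cast_ofNat, cos_pi_div_four, div_pow,
    sq_sqrt zero_le_two]
  ring

theorem cos_pi_div_five_sq_mem_Ioo : cos (π / 5) ^ 2 ∈ Set.Ioo (5 / 8 : ℝ) (2 / 3) := by
  have hlower : 2 < √5 := lt_sqrt_of_sq_lt (by norm_num)
  have hupper : √5 < 7 / 3 := (sqrt_lt' (by norm_num)).2 (by norm_num)
  rw [cos_pi_div_five_sq]
  constructor <;> linarith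

theorem det_schlafliMatrix_schlafliSymbol_four_pos : 0 < (schlafliMatrix schlafliSymbol 4).det := by
  rw [det_schlafliMatrix_schlafliSymbol_four]
  linarith [cos_pi_div_five_sq_mem_Ioo.2]

theorem det_schlafliMatrix_schlafliSymbol_five_neg : (schlafliMatrix schlafliSymbol 5).det < 0 := by
  rw [det_schlafliMatrix_schlafliSymbol_five]
  linarith [cos_pi_div_five_sq_mem_Ioo.1]

theorem det_schlafliMatrix_schlafliSymbol_six_neg : (schlafliMatrix schlafliSymbol 6).det < 0 := by
  rw [det_schlafliMatrix_schlafliSymbol_six]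
  linarith [cos_pi_div_five_sq_mem_Ioo.1]

theorem inv_C2_four_four :
    C2⁻¹ 4 4 = (schlafliMatrix schlafliSymbol 4).det / (schlafliMatrix schlafliSymbol 6).det := by
  rw [C2_eq_schlafliMatrix]
  exact inv_schlafliMatrix_penultimate_penultimate schlafliSymbol 4

theorem inv_C2_five_five :
    C2⁻¹ 5 5 = (schlafliMatrix schlafliSymbol 5).det / (schlafliMatrix schlafliSymbol 6).det := by
  rw [C2_eq_schlafliMatrix]
  exact inv_schlafliMatrix_last_last schlafliSymbol 5

theorem inv_C2_four_five :
    C2⁻¹ 4 5 = cos (π / 4) * (schlafliMatrix schlafliSymbol 4).det /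
      (schlafliMatrix schlafliSymbol 6).det := by
  rw [C2_eq_schlafliMatrix]
  exact inv_schlafliMatrix_penultimate_last schlafliSymbol 4

end Orthoscheme

theorem one_lt_sub_sq_div_of_neg {K : Type*} [Field K] [LinearOrder K] [IsStrictOrderedRing K]
    {x c : K} (hx : x < 0) (hc : c ≠ 0) : 1 < (x - c ^ 2) / x :=
  (one_lt_div_of_neg hx).2 (sub_lt_self x (sq_pos_of_ne_zero hc))

theorem stmt3 :
    C2⁻¹ 4 4 < 0 ∧ 0 < C2⁻¹ 5 5 ∧ C2⁻¹ 4 5 ≠ 0 ∧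
    1 < (C2⁻¹ 4 4 * C2⁻¹ 5 5 - (C2⁻¹ 4 5)^2) / (C2⁻¹ 4 4 * C2⁻¹ 5 5) := by
  have hθ4 := det_schlafliMatrix_schlafliSymbol_four_pos
  have hθ5 := det_schlafliMatrix_schlafliSymbol_five_neg
  have hθ6 := det_schlafliMatrix_schlafliSymbol_six_neg
  have h44 : C2⁻¹ 4 4 < 0 := by
    rw [inv_C2_four_four]
    exact div_neg_of_pos_of_neg hθ4 hθ6
  have h55 : 0 < C2⁻¹ 5 5 := by
    rw [inv_C2_five_five]
    exact div_pos_of_neg_of_neg hθ5 hθ6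
  have h45 : C2⁻¹ 4 5 ≠ 0 := by
    have hcos : cos (π / 4) ≠ 0 := by simp
    rw [inv_C2_four_five]
    exact div_ne_zero (mul_ne_zero hcos hθ4.ne') hθ6.ne
  exact ⟨h44, h55, h45, one_lt_sub_sq_div_of_neg (mul_neg_of_neg_of_pos h44 h55) h45⟩
end
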